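/- arXiv:1812.05580 — 2 statements merged into one kernel-verified Lean document; each statement's English description precedes it below -/
import Mathlib

section
/- For every natural number n, the number of partitions of n into parts greater than 1, in which no two consecutive integers both appear as parts and no part appears more than twice, equals the number of partitions of n such that, with 2j the largest repeated part, every positive even integer less than 2j appears at least twice, no odd part less than 2j+2 appears, each odd part appears at most once, no part greater than 2j is repeated, and no two consecutive integers both appear as parts. -/
/-- The largest repeated part of a partition (`0` if no part is repeated). -/
def largestRepeatedPart {n : ℕ} (π : n.Partition) : ℕ :=
  (π.parts.toFinset.filter (fun j => 2 ≤ π.parts.count j)).sup id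

/-!
A multiset of integers `≥ 2` without consecutive elements is a list of pairs (gap, multiplicity),
one for each distinct part. Partitions of the first family are the lists whose multiplicities are
`1` or `2`; partitions of the second family begin with repeated parts `2, 4, …, 2j` in arbitrary
multiplicities `k + 2`, followed by parts of multiplicity one with arbitrary gaps, so they are
pairs of lists `(K, E)` of natural numbers. Reading the first kind of list from its end, a single
or double part sitting `d` above its least possible position becomes a new entry `d` of `E` or
of `K`, at the cost of raising the first entry of the other list by `d + 1` or by `d`. Comparing
the first entries of `K` and `E` tells which step came last, so this is a bijection, and it
preserves the sum of the parts.
-/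

open Multiset (count replicate)

section Gaps

/-- The multiset of parts encoded by a list of pairs `(d, c)`, one for each distinct part in
increasing order: the part is repeated `c + 1` times and exceeds the preceding one (or `0`) by
`d + 2`. -/
def ofGaps : List (ℕ × ℕ) → Multiset ℕ
  | [] => 0
  | (d, c) :: L => replicate (c + 1) (d + 2) + (ofGaps L).map (· + (d + 2))

/-- Multisets of integers greater than `1`, no two of which are consecutive. -/
def IsSeparated (m : Multiset ℕ) : Prop :=
  (∀ x ∈ m, 1 < x) ∧ ∀ x, ¬(x ∈ m ∧ x + 1 ∈ m)

variable {d c x : ℕ} {L : List (ℕ × ℕ)} {m : Multiset ℕ}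

lemma mem_ofGaps_cons :
    x ∈ ofGaps ((d, c) :: L) ↔ x = d + 2 ∨ ∃ y ∈ ofGaps L, y + (d + 2) = x := by
  simp only [ofGaps, Multiset.mem_add, Multiset.mem_replicate, Multiset.mem_map, ne_eq,
    Nat.succ_ne_zero, not_false_eq_true, true_and]

lemma one_lt_of_mem_ofGaps (hx : x ∈ ofGaps L) : 1 < x := by
  cases L with
  | nil => simp [ofGaps] at hx
  | cons p L => rcases mem_ofGaps_cons.1 hx with rfl | ⟨y, -, rfl⟩ <;> omega

lemma count_ofGaps_cons_of_lt (hx : x < d + 2) : count x (ofGaps ((d, c) :: L)) = 0 := by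
  rw [Multiset.count_eq_zero, mem_ofGaps_cons]
  rintro (rfl | ⟨y, -, rfl⟩) <;> omega

lemma count_ofGaps_cons_self : count (d + 2) (ofGaps ((d, c) :: L)) = c + 1 := by
  have h : d + 2 ∉ (ofGaps L).map (· + (d + 2)) := fun h ↦ by
    obtain ⟨y, hy, hyd⟩ := Multiset.mem_map.1 h
    have := one_lt_of_mem_ofGaps hy
    omega
  rw [ofGaps, Multiset.count_add, Multiset.count_replicate_self, Multiset.count_eq_zero.2 h]

lemma count_ofGaps_cons_add (hx : x ≠ 0) :
    count (x + (d + 2)) (ofGaps ((d, c) :: L)) = count x (ofGaps L) := by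
  have h : x + (d + 2) ∉ replicate (c + 1) (d + 2) := fun h ↦ by
    have := Multiset.eq_of_mem_replicate h
    omega
  rw [ofGaps, Multiset.count_add, Multiset.count_eq_zero.2 h, zero_add,
    Multiset.count_map_eq_count' _ _ (add_left_injective _)]

lemma count_ofGaps_le_succ_iff {b : ℕ} :
    (∀ x, count x (ofGaps L) ≤ b + 1) ↔ ∀ p ∈ L, p.2 ≤ b := by
  induction L with
  | nil => simp [ofGaps]
  | cons p L ih =>
    obtain ⟨d, c⟩ := p
    rw [List.forall_mem_cons, ← ih]
    constructor
    · intro h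
      refine ⟨by simpa [count_ofGaps_cons_self] using h (d + 2), fun x ↦ ?_⟩
      rcases eq_or_ne x 0 with rfl | hx
      · rw [Multiset.count_eq_zero.2 fun h0 ↦ absurd (one_lt_of_mem_ofGaps h0) (by omega)]
        omega
      · exact (count_ofGaps_cons_add hx).symm.trans_le (h _)
    · rintro ⟨hc, hL⟩ x
      rcases lt_trichotomy x (d + 2) with hx | rfl | hx
      · simp [count_ofGaps_cons_of_lt hx]
      · simpa [count_ofGaps_cons_self] using hc
      · obtain ⟨y, rfl⟩ := Nat.exists_eq_add_of_lt hx
        rw [show d + 2 + y + 1 = y + 1 + (d + 2) by ring, count_ofGaps_cons_add y.succ_ne_zero]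
        exact hL _

lemma ofGaps_injective : Function.Injective ofGaps := by
  intro L L' h
  induction L generalizing L' with
  | nil => cases L' with
    | nil => rfl
    | cons p L' => simpa [ofGaps] using congrArg Multiset.card h
  | cons p L ih => cases L' with
    | nil => simpa [ofGaps] using congrArg Multiset.card h
    | cons p' L' =>
      obtain ⟨⟨d, c⟩, ⟨d', c'⟩⟩ := p, p'
      have hd : d = d' := by
        by_contra hne
        rcases Nat.lt_or_gt_of_ne hne with hlt | hlt
        · have := congrArg (count (d + 2)) h
          rw [count_ofGaps_cons_self, count_ofGaps_cons_of_lt (by omega)] at this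
          omega
        · have := congrArg (count (d' + 2)) h
          rw [count_ofGaps_cons_self, count_ofGaps_cons_of_lt (by omega)] at this
          omega
      subst hd
      have hc : c = c' := by
        simpa [count_ofGaps_cons_self] using congrArg (count (d + 2)) h
      subst hc
      rw [ih (Multiset.map_injective (add_left_injective _) (add_left_cancel h))]

lemma isSeparated_ofGaps (L : List (ℕ × ℕ)) : IsSeparated (ofGaps L) := by
  refine ⟨fun _ ↦ one_lt_of_mem_ofGaps, ?_⟩
  induction L with
  | nil => simp [ofGaps]
  | cons p L ih =>
    rintro x ⟨hx, hx'⟩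
    rcases mem_ofGaps_cons.1 hx with rfl | ⟨y, hy, rfl⟩ <;>
      rcases mem_ofGaps_cons.1 hx' with h | ⟨z, hz, h⟩
    · omega
    · have := one_lt_of_mem_ofGaps hz
      omega
    · omega
    · exact ih y ⟨hy, by rwa [show y + 1 = z by omega]⟩

/-- The elements of `m` greater than `v`, lowered by `v`. -/
def lowerBy (v : ℕ) (m : Multiset ℕ) : Multiset ℕ :=
  (m.filter (v < ·)).map (· - v)

lemma mem_lowerBy {v : ℕ} : x ∈ lowerBy v m ↔ x ≠ 0 ∧ x + v ∈ m := by
  simp only [lowerBy, Multiset.mem_map, Multiset.mem_filter]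
  constructor
  · rintro ⟨y, ⟨hy, hvy⟩, rfl⟩
    exact ⟨by omega, by rwa [Nat.sub_add_cancel hvy.le]⟩
  · rintro ⟨hx, hxm⟩
    exact ⟨x + v, ⟨hxm, by omega⟩, by omega⟩

lemma eq_replicate_add_map_lowerBy {v : ℕ} (hv : ∀ x ∈ m, v ≤ x) :
    m = replicate (count v m) v + (lowerBy v m).map (· + v) := by
  have hle : m.filter (¬v < ·) = replicate (count v m) v := by
    rw [← Multiset.filter_eq']
    exact Multiset.filter_congr fun x hx ↦ by have := hv x hx; omega
  have hlt : (lowerBy v m).map (· + v) = m.filter (v < ·) := by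
    rw [lowerBy, Multiset.map_map]
    refine (Multiset.map_congr rfl fun x hx ↦ ?_).trans (Multiset.map_id _)
    exact Nat.sub_add_cancel (Multiset.mem_filter.1 hx).2.le
  rw [hlt, ← hle, add_comm, Multiset.filter_add_not]

lemma isSeparated_lowerBy (hm : IsSeparated m) {v : ℕ} (hv : v ∈ m) :
    IsSeparated (lowerBy v m) := by
  constructor
  · intro x hx
    obtain ⟨hx0, hxv⟩ := mem_lowerBy.1 hx
    have hx1 : x ≠ 1 := by
      rintro rfl
      exact hm.2 v ⟨hv, by rwa [add_comm]⟩
    omega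
  · rintro x ⟨hx, hx'⟩
    exact hm.2 (x + v) ⟨(mem_lowerBy.1 hx).2, by simpa [add_right_comm] using (mem_lowerBy.1 hx').2⟩

lemma IsSeparated.exists_ofGaps_eq (hm : IsSeparated m) : ∃ L, ofGaps L = m := by
  induction h : m.card using Nat.strong_induction_on generalizing m with
  | _ s ih =>
    subst h
    by_cases hm0 : m = 0
    · exact ⟨[], hm0.symm⟩
    obtain ⟨v, hv, hmin⟩ : ∃ v ∈ m, ∀ x ∈ m, v ≤ x :=
      have hne := Multiset.exists_mem_of_ne_zero hm0
      ⟨Nat.find hne, Nat.find_spec hne, fun _ ↦ Nat.find_min' hne⟩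
    have hv2 : 2 ≤ v := hm.1 v hv
    have hcount : 0 < count v m := Multiset.count_pos.2 hv
    have hdecomp := eq_replicate_add_map_lowerBy hmin
    have hcard : (lowerBy v m).card < m.card := by
      have := congrArg Multiset.card hdecomp
      simp only [Multiset.card_add, Multiset.card_replicate, Multiset.card_map] at this
      omega
    obtain ⟨L, hL⟩ := ih _ hcard (isSeparated_lowerBy hm hv) rfl
    refine ⟨(v - 2, count v m - 1) :: L, ?_⟩
    rw [ofGaps, hL, Nat.sub_add_cancel hv2, Nat.sub_add_cancel hcount, ← hdecomp]

lemma card_ofGaps_cons (d c : ℕ) (L : List (ℕ × ℕ)) :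
    (ofGaps ((d, c) :: L)).card = c + 1 + (ofGaps L).card := by
  simp only [ofGaps, Multiset.card_add, Multiset.card_replicate, Multiset.card_map]

lemma card_ofGaps_append (L L' : List (ℕ × ℕ)) :
    (ofGaps (L ++ L')).card = (ofGaps L).card + (ofGaps L').card := by
  induction L with
  | nil => simp [ofGaps]
  | cons p L ih =>
    rw [List.cons_append, card_ofGaps_cons, card_ofGaps_cons, ih, ← add_assoc]

lemma sum_ofGaps_cons (d c : ℕ) (L : List (ℕ × ℕ)) :
    (ofGaps ((d, c) :: L)).sum = (ofGaps L).sum + (d + 2) * (c + 1 + (ofGaps L).card) := by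
  simp only [ofGaps, Multiset.sum_add, Multiset.sum_replicate, smul_eq_mul, Multiset.sum_map_add,
    Multiset.map_id', Multiset.map_const']
  ring

lemma sum_ofGaps_append (L L' : List (ℕ × ℕ)) :
    (ofGaps (L ++ L')).sum =
      (ofGaps L).sum + (ofGaps L').sum + (L.map (·.1 + 2)).sum * (ofGaps L').card := by
  induction L with
  | nil => simp [ofGaps]
  | cons p L ih =>
    obtain ⟨d, c⟩ := p
    rw [List.cons_append, sum_ofGaps_cons, sum_ofGaps_cons, ih, card_ofGaps_append, List.map_cons,
      List.sum_cons]
    ring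

end Gaps

section AtMostTwice

/-- The gap list in which `(d, b)` stands for a part of gap `d` that is single if `b = false` and
double if `b = true`. -/
def doublingGaps (L : List (ℕ × Bool)) : List (ℕ × ℕ) :=
  L.map (Prod.map id Bool.toNat)

lemma doublingGaps_cons (d : ℕ) (b : Bool) (L : List (ℕ × Bool)) :
    doublingGaps ((d, b) :: L) = (d, b.toNat) :: doublingGaps L :=
  rfl

lemma doublingGaps_injective : Function.Injective doublingGaps :=
  List.map_injective_iff.2 <|
    Function.injective_id.prodMap fun b b' ↦ by cases b <;> cases b' <;> simp

lemma exists_doublingGaps_eq_iff {L : List (ℕ × ℕ)} :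
    (∃ L', doublingGaps L' = L) ↔ ∀ p ∈ L, p.2 ≤ 1 := by
  change L ∈ Set.range (List.map _) ↔ _
  rw [Set.range_list_map]
  refine forall₂_congr fun p _ ↦ ⟨?_, fun hp ↦ ?_⟩
  · rintro ⟨q, rfl⟩
    exact q.2.toNat_le
  · obtain ⟨d, c⟩ := p
    obtain rfl | rfl : c = 0 ∨ c = 1 := by simp only at hp; omega
    exacts [⟨(d, false), rfl⟩, ⟨(d, true), rfl⟩]

lemma mem_range_ofGaps_doublingGaps {m : Multiset ℕ} :
    m ∈ Set.range (fun L ↦ ofGaps (doublingGaps L)) ↔ IsSeparated m ∧ ∀ x, count x m ≤ 2 := by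
  constructor
  · rintro ⟨L, rfl⟩
    exact ⟨isSeparated_ofGaps _,
      count_ofGaps_le_succ_iff.2 (exists_doublingGaps_eq_iff.1 ⟨L, rfl⟩)⟩
  · rintro ⟨hm, hcount⟩
    obtain ⟨L, rfl⟩ := hm.exists_ofGaps_eq
    obtain ⟨L, rfl⟩ := exists_doublingGaps_eq_iff.2 (count_ofGaps_le_succ_iff.1 hcount)
    exact ⟨L, rfl⟩

end AtMostTwice

section Staircase

/-- A multiset in which `x` is repeated whenever `x + 2` is, for every `x ≠ 0`. When `1` is not
an element, this says that the repeated elements are `2, 4, …, 2j` for some `j`. -/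
def IsStaircase (m : Multiset ℕ) : Prop :=
  ∀ x ≠ 0, 2 ≤ count (x + 2) m → 2 ≤ count x m

/-- The gap list of a staircase: the list `K` gives the excess over `2` of the multiplicities of
the repeated parts `2j, …, 4, 2`, from the largest down, and `E` gives the gaps of the single
parts, in increasing order. -/
def stairGaps (K E : List ℕ) : List (ℕ × ℕ) :=
  K.reverse.map (fun k ↦ (0, k + 1)) ++ E.map (fun e ↦ (e, 0))

variable {m : Multiset ℕ} {x : ℕ}

lemma mem_of_two_le_count (hx : 2 ≤ count x m) : x ∈ m :=
  Multiset.count_pos.1 (by omega)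

lemma stairGaps_append_singleton (K E : List ℕ) (k : ℕ) :
    stairGaps (K ++ [k]) E = (0, k + 1) :: stairGaps K E := by
  simp [stairGaps]

lemma stairGaps_nil_cons (e : ℕ) (E : List ℕ) :
    stairGaps [] (e :: E) = (e, 0) :: stairGaps [] E :=
  rfl

lemma stairGaps_eq_append (K E : List ℕ) : stairGaps K E = stairGaps K [] ++ stairGaps [] E := by
  simp [stairGaps]

lemma stairGaps_injective : Function.Injective fun p : List ℕ × List ℕ ↦ stairGaps p.1 p.2 := by
  rintro ⟨K, E⟩ ⟨K', E'⟩ h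
  have hK : K.map (fun k ↦ (0, k + 1)) = K'.map (fun k ↦ (0, k + 1)) := by
    simpa [stairGaps, List.filter_map, Function.comp_def] using congrArg (List.filter (·.2 ≠ 0)) h
  have hE : E.map (fun e ↦ (e, 0)) = E'.map (fun e ↦ (e, 0)) := by
    simpa [stairGaps, List.filter_map, Function.comp_def] using congrArg (List.filter (·.2 = 0)) h
  exact Prod.ext (List.map_injective_iff.2 (fun _ _ h ↦ by simpa using h) hK)
    (List.map_injective_iff.2 (fun _ _ h ↦ by simpa using h) hE)

lemma count_ofGaps_stairGaps_nil_le_one (E : List ℕ) (x : ℕ) :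
    count x (ofGaps (stairGaps [] E)) ≤ 1 :=
  count_ofGaps_le_succ_iff.2 (by simp [stairGaps]) x

lemma isStaircase_ofGaps_stairGaps (K E : List ℕ) : IsStaircase (ofGaps (stairGaps K E)) := by
  induction K using List.reverseRecOn with
  | nil =>
    intro x _ hx
    have := count_ofGaps_stairGaps_nil_le_one E (x + 2)
    omega
  | append_singleton K k ih =>
    intro x hx h
    rw [stairGaps_append_singleton] at h ⊢
    rw [count_ofGaps_cons_add (d := 0) hx] at h
    have hx1 : 1 < x := one_lt_of_mem_ofGaps (mem_of_two_le_count h)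
    obtain ⟨y, rfl⟩ := Nat.exists_eq_add_of_le' hx1
    rcases eq_or_ne y 0 with rfl | hy
    · rw [count_ofGaps_cons_self (d := 0)]
      omega
    · rw [count_ofGaps_cons_add (d := 0) hy]
      exact ih y hy h

lemma IsStaircase.even_of_two_le_count (hm : IsStaircase m) (h1 : 1 ∉ m) (hx : 2 ≤ count x m) :
    Even x := by
  induction x using Nat.twoStepInduction with
  | zero => exact Even.zero
  | one => exact absurd (mem_of_two_le_count hx) h1
  | more x ih _ =>
    rcases eq_or_ne x 0 with rfl | hx0
    · exact even_two
    · exact (ih (hm x hx0 hx)).add even_two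

lemma IsStaircase.two_le_count_of_even (hm : IsStaircase m) (h1 : 1 ∉ m) (hx : 2 ≤ count x m)
    {y : ℕ} (hy : Even y) (hy0 : y ≠ 0) (hyx : y ≤ x) : 2 ≤ count y m := by
  obtain ⟨i, rfl⟩ := Nat.exists_eq_add_of_le hyx
  obtain ⟨i, rfl⟩ := ((Nat.even_add.1 (hm.even_of_two_le_count h1 hx)).1 hy).two_dvd
  clear hyx
  induction i with
  | zero => exact hx
  | succ i ih => exact ih (hm _ (by omega) hx)

lemma IsStaircase.exists_stairGaps_eq {L : List (ℕ × ℕ)} (hL : IsStaircase (ofGaps L)) :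
    ∃ K E, stairGaps K E = L := by
  induction L with
  | nil => exact ⟨[], [], rfl⟩
  | cons p L ih =>
    obtain ⟨d, c⟩ := p
    have h1 : 1 ∉ ofGaps ((d, c) :: L) := fun h ↦ absurd (one_lt_of_mem_ofGaps h) (by omega)
    have hrepeated : ∀ x, 2 ≤ count x (ofGaps ((d, c) :: L)) → d = 0 ∧ c ≠ 0 := fun x hx ↦ by
      have hx1 : 1 < x := one_lt_of_mem_ofGaps (mem_of_two_le_count hx)
      have h2 := hL.two_le_count_of_even h1 hx even_two two_ne_zero hx1
      rcases eq_or_ne d 0 with rfl | hd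
      · have : count 2 (ofGaps ((0, c) :: L)) = c + 1 := count_ofGaps_cons_self
        omega
      · rw [count_ofGaps_cons_of_lt (by omega)] at h2
        omega
    rcases c with _ | k
    · have hsingle : ∀ p ∈ (d, 0) :: L, p.2 ≤ 0 := count_ofGaps_le_succ_iff.1 fun x ↦ by
        by_contra! hx
        exact (hrepeated x hx).2 rfl
      refine ⟨[], ((d, 0) :: L).map Prod.fst, ?_⟩
      calc
        _ = ((d, 0) :: L).map (fun p ↦ (p.1, 0)) := by simp [stairGaps]
        _ = ((d, 0) :: L).map id :=
          List.map_congr_left fun p hp ↦ Prod.ext rfl (Nat.le_zero.1 (hsingle p hp)).symm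
        _ = _ := List.map_id _
    · obtain ⟨rfl, -⟩ := hrepeated (d + 2) (by rw [count_ofGaps_cons_self]; omega)
      have hLtail : IsStaircase (ofGaps L) := fun x hx h ↦ by
        rw [← count_ofGaps_cons_add (d := 0) (c := k + 1) (by omega)] at h ⊢
        exact hL _ (by omega) h
      obtain ⟨K, E, rfl⟩ := ih hLtail
      exact ⟨K ++ [k], E, stairGaps_append_singleton K E k⟩

lemma mem_range_ofGaps_stairGaps :
    m ∈ Set.range (fun p : List ℕ × List ℕ ↦ ofGaps (stairGaps p.1 p.2)) ↔
      IsSeparated m ∧ IsStaircase m := by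
  constructor
  · rintro ⟨⟨K, E⟩, rfl⟩
    exact ⟨isSeparated_ofGaps _, isStaircase_ofGaps_stairGaps K E⟩
  · rintro ⟨hsep, hstair⟩
    obtain ⟨L, rfl⟩ := hsep.exists_ofGaps_eq
    obtain ⟨K, E, rfl⟩ := hstair.exists_stairGaps_eq
    exact ⟨(K, E), rfl⟩

lemma card_ofGaps_stairGaps_nil (E : List ℕ) : (ofGaps (stairGaps [] E)).card = E.length := by
  induction E with
  | nil => rfl
  | cons e E ih =>
    rw [stairGaps_nil_cons, card_ofGaps_cons, ih, List.length_cons, zero_add, add_comm]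

lemma sum_map_stairGaps_nil (K : List ℕ) :
    ((stairGaps K []).map (·.1 + 2)).sum = 2 * K.length := by
  simp [stairGaps, Function.comp_def, mul_comm]

lemma sum_ofGaps_stairGaps (K E : List ℕ) :
    (ofGaps (stairGaps K E)).sum = (ofGaps (stairGaps K [])).sum +
      (ofGaps (stairGaps [] E)).sum + 2 * K.length * E.length := by
  rw [stairGaps_eq_append, sum_ofGaps_append, sum_map_stairGaps_nil, card_ofGaps_stairGaps_nil]

lemma sum_ofGaps_stairGaps_cons_left (k : ℕ) (K E : List ℕ) :
    (ofGaps (stairGaps (k :: K) E)).sum =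
      (ofGaps (stairGaps K E)).sum + 2 * (K.length + 1) * (k + 2) + 2 * E.length := by
  have hK : (ofGaps (stairGaps (k :: K) [])).sum =
      (ofGaps (stairGaps K [])).sum + 2 * (K.length + 1) * (k + 2) := by
    rw [show stairGaps (k :: K) [] = stairGaps K [] ++ [(0, k + 1)] by simp [stairGaps],
      sum_ofGaps_append, sum_ofGaps_cons, card_ofGaps_cons, sum_map_stairGaps_nil]
    simp only [ofGaps, Multiset.card_zero, Multiset.sum_zero]
    ring
  rw [sum_ofGaps_stairGaps, sum_ofGaps_stairGaps K, hK, List.length_cons]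
  ring

lemma sum_ofGaps_stairGaps_cons_right (K : List ℕ) (e : ℕ) (E : List ℕ) :
    (ofGaps (stairGaps K (e :: E))).sum =
      (ofGaps (stairGaps K E)).sum + (e + 2) * (E.length + 1) + 2 * K.length := by
  have hE : (ofGaps (stairGaps [] (e :: E))).sum =
      (ofGaps (stairGaps [] E)).sum + (e + 2) * (E.length + 1) := by
    rw [stairGaps_nil_cons, sum_ofGaps_cons, card_ofGaps_stairGaps_nil]
    ring
  rw [sum_ofGaps_stairGaps, sum_ofGaps_stairGaps K E, hE, List.length_cons]
  ring

lemma sum_ofGaps_stairGaps_modifyHead_left (a : ℕ) (K E : List ℕ) :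
    (ofGaps (stairGaps (K.modifyHead (· + a)) E)).sum =
      (ofGaps (stairGaps K E)).sum + 2 * a * K.length := by
  cases K with
  | nil => simp
  | cons k K =>
    rw [List.modifyHead_cons, sum_ofGaps_stairGaps_cons_left, sum_ofGaps_stairGaps_cons_left,
      List.length_cons]
    ring

lemma sum_ofGaps_stairGaps_modifyHead_right (K : List ℕ) (a : ℕ) (E : List ℕ) :
    (ofGaps (stairGaps K (E.modifyHead (· + a)))).sum =
      (ofGaps (stairGaps K E)).sum + a * E.length := by
  cases E with
  | nil => simp
  | cons e E =>
    rw [List.modifyHead_cons, sum_ofGaps_stairGaps_cons_right, sum_ofGaps_stairGaps_cons_right,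
      List.length_cons]
    ring

end Staircase

section Split

/-- The bijection between the two kinds of gap lists, in the direction from partitions with at
most double parts to staircases. -/
def splitGaps : List (ℕ × Bool) → List ℕ × List ℕ
  | [] => ([], [])
  | (d, false) :: L => ((splitGaps L).1.modifyHead (· + (d + 1)), d :: (splitGaps L).2)
  | (d, true) :: L => (d :: (splitGaps L).1, (splitGaps L).2.modifyHead (· + d))

/-- The inverse of `splitGaps`. -/
def mergeGaps : List ℕ → List ℕ → List (ℕ × Bool)
  | [], [] => []
  | [], e :: E => (e, false) :: mergeGaps [] E
  | k :: K, [] => (k, true) :: mergeGaps K []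
  | k :: K, e :: E =>
    -- A double part leaves `k = d ≤ e` on top, a single part leaves `e = d < k`.
    if k ≤ e then (k, true) :: mergeGaps K ((e - k) :: E)
    else (e, false) :: mergeGaps ((k - (e + 1)) :: K) E
termination_by K E => K.length + E.length

lemma mergeGaps_splitGaps (L : List (ℕ × Bool)) :
    mergeGaps (splitGaps L).1 (splitGaps L).2 = L := by
  fun_induction splitGaps L with
  | case1 => simp [mergeGaps]
  | case2 d L ih => cases h : (splitGaps L).1 <;> simp_all [mergeGaps, Nat.lt_add_left]
  | case3 d L ih => cases h : (splitGaps L).2 <;> simp_all [mergeGaps]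

lemma splitGaps_mergeGaps (K E : List ℕ) : splitGaps (mergeGaps K E) = (K, E) := by
  fun_induction mergeGaps K E with
  | case1 => rfl
  | case2 e E ih => simp [splitGaps, ih]
  | case3 k K ih => simp [splitGaps, ih]
  | case4 k K e E hke ih => simp [splitGaps, ih, hke]
  | case5 k K e E hke ih => simp [splitGaps, ih, show e + 1 ≤ k by omega]

/-- `splitGaps` as an equivalence. -/
def splitGapsEquiv : List (ℕ × Bool) ≃ List ℕ × List ℕ where
  toFun := splitGaps
  invFun p := mergeGaps p.1 p.2
  left_inv := mergeGaps_splitGaps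
  right_inv p := splitGaps_mergeGaps p.1 p.2

lemma card_ofGaps_doublingGaps (L : List (ℕ × Bool)) :
    (ofGaps (doublingGaps L)).card =
      2 * (splitGaps L).1.length + (splitGaps L).2.length := by
  fun_induction splitGaps L with
  | case1 => rfl
  | case2 d L ih | case3 d L ih =>
    simp only [doublingGaps_cons, card_ofGaps_cons, ih, List.length_cons, List.length_modifyHead,
      Bool.toNat_false, Bool.toNat_true]
    ring

lemma sum_ofGaps_stairGaps_splitGaps (L : List (ℕ × Bool)) :
    (ofGaps (stairGaps (splitGaps L).1 (splitGaps L).2)).sum = (ofGaps (doublingGaps L)).sum := by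
  fun_induction splitGaps L with
  | case1 => rfl
  | case2 d L ih =>
    rw [sum_ofGaps_stairGaps_cons_right, sum_ofGaps_stairGaps_modifyHead_left, ih,
      List.length_modifyHead, doublingGaps_cons, sum_ofGaps_cons, card_ofGaps_doublingGaps]
    rw [Bool.toNat_false]
    ring
  | case3 d L ih =>
    rw [sum_ofGaps_stairGaps_cons_left, sum_ofGaps_stairGaps_modifyHead_right, ih,
      List.length_modifyHead, doublingGaps_cons, sum_ofGaps_cons, card_ofGaps_doublingGaps]
    rw [Bool.toNat_true]
    ring

end Split

section Partition

variable {n : ℕ}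

lemma le_largestRepeatedPart (π : n.Partition) {x : ℕ} (hx : 2 ≤ count x π.parts) :
    x ≤ largestRepeatedPart π :=
  Finset.le_sup (f := id) <| Finset.mem_filter.2
    ⟨Multiset.mem_toFinset.2 (mem_of_two_le_count hx), hx⟩

lemma two_le_count_largestRepeatedPart (π : n.Partition) (h : largestRepeatedPart π ≠ 0) :
    2 ≤ count (largestRepeatedPart π) π.parts := by
  have hne : (π.parts.toFinset.filter (2 ≤ count · π.parts)).Nonempty :=
    Finset.nonempty_of_ne_empty fun he ↦ h (by rw [largestRepeatedPart, he, Finset.sup_empty]; rfl)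
  obtain ⟨x, hx, hsup⟩ := Finset.exists_mem_eq_sup _ hne id
  rw [largestRepeatedPart, hsup]
  exact (Finset.mem_filter.1 hx).2

lemma isSeparated_and_isStaircase_parts_iff (π : n.Partition) :
    IsSeparated π.parts ∧ IsStaircase π.parts ↔
      (∀ j, Odd j → π.parts.count j ≤ 1) ∧
      (∀ j, Odd j → j < largestRepeatedPart π + 2 → π.parts.count j = 0) ∧
      (∀ j, Even j → 0 < j → j < largestRepeatedPart π → 2 ≤ π.parts.count j) ∧
      (∀ j, ¬(j ∈ π.parts ∧ j + 1 ∈ π.parts)) := by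
  constructor
  · rintro ⟨⟨hgt, hcons⟩, hstair⟩
    have h1 : 1 ∉ π.parts := fun h ↦ lt_irrefl 1 (hgt 1 h)
    have hR := two_le_count_largestRepeatedPart π
    refine ⟨fun j hj ↦ ?_, fun j hj hjR ↦ ?_, fun j hj hj0 hjR ↦ ?_, hcons⟩
    · by_contra! hcount
      exact Nat.not_even_iff_odd.2 hj (hstair.even_of_two_le_count h1 hcount)
    · rw [Multiset.count_eq_zero]
      intro hjm
      have hj1 := hgt j hjm
      have hR0 : largestRepeatedPart π ≠ 0 := by omega
      rcases Nat.lt_or_ge j (largestRepeatedPart π) with hlt | hge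
      · have := hstair.two_le_count_of_even h1 (hR hR0) hj.add_one (by omega) hlt
        exact hcons j ⟨hjm, mem_of_two_le_count this⟩
      · have hne : largestRepeatedPart π ≠ j := fun h ↦
          Nat.not_even_iff_odd.2 (h ▸ hj) (hstair.even_of_two_le_count h1 (hR hR0))
        refine hcons (largestRepeatedPart π) ⟨mem_of_two_le_count (hR hR0), ?_⟩
        rwa [show largestRepeatedPart π + 1 = j by omega]
    · exact hstair.two_le_count_of_even h1 (hR (by omega)) hj hj0.ne' hjR.le
  · rintro ⟨hodd, hodd0, heven, hcons⟩
    refine ⟨⟨fun x hx ↦ ?_, hcons⟩, fun x hx0 hx ↦ ?_⟩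
    · have h1 : x ≠ 1 := by
        rintro rfl
        exact Multiset.count_eq_zero.1 (hodd0 1 odd_one (by omega)) hx
      have := π.parts_pos hx
      omega
    · have hle := le_largestRepeatedPart π hx
      have hxe : Even x := by
        by_contra hxo
        have := hodd (x + 2) ((Nat.not_even_iff_odd.1 hxo).add_even even_two)
        omega
      exact heven x hxe (by omega) (by omega)

lemma card_partition_eq_card_sum_eq {α : Type*} {F : α → Multiset ℕ} (hF : Function.Injective F)
    (hpos : ∀ a, ∀ x ∈ F a, 0 < x) {P : n.Partition → Prop}
    (hP : ∀ π, P π ↔ π.parts ∈ Set.range F) :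
    Nat.card {π // P π} = Nat.card {a // (F a).sum = n} := by
  let toPartition (a : {a // (F a).sum = n}) : {π : n.Partition // P π} :=
    ⟨⟨F a, hpos a _, a.2⟩, (hP _).2 ⟨a, rfl⟩⟩
  refine (Nat.card_eq_of_bijective toPartition ⟨fun a b hab ↦ ?_, fun ⟨π, hπ⟩ ↦ ?_⟩).symm
  · exact Subtype.ext (hF (congrArg (·.1.parts) hab))
  · obtain ⟨a, ha⟩ := (hP π).1 hπ
    exact ⟨⟨a, by rw [ha, π.parts_sum]⟩, Subtype.ext (Nat.Partition.ext ha)⟩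

end Partition

/-- `B_{3,1}(n) = T(n)`: the number of partitions of `n` into parts greater than `1`, with no
two consecutive integers both appearing and no part appearing more than twice, equals the number
of partitions of `n` counted by `T(n)`: every odd part appears at most once, no odd part less
than (largest repeated part) + 2 appears, every positive even integer less than the largest
repeated part appears at least twice, and no two consecutive integers both appear as parts. -/
theorem B31_eq_T (n : ℕ) :
    Nat.card {π : n.Partition //
        (∀ j ∈ π.parts, 1 < j) ∧
        (∀ j, ¬(j ∈ π.parts ∧ j + 1 ∈ π.parts)) ∧
        (∀ j, π.parts.count j ≤ 2)} =
      Nat.card {π : n.Partition //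
        (∀ j, Odd j → π.parts.count j ≤ 1) ∧
        (∀ j, Odd j → j < largestRepeatedPart π + 2 → π.parts.count j = 0) ∧
        (∀ j, Even j → 0 < j → j < largestRepeatedPart π → 2 ≤ π.parts.count j) ∧
        (∀ j, ¬(j ∈ π.parts ∧ j + 1 ∈ π.parts))} := by
  calc
    _ = Nat.card {L : List (ℕ × Bool) // (ofGaps (doublingGaps L)).sum = n} :=
      card_partition_eq_card_sum_eq (ofGaps_injective.comp doublingGaps_injective)
        (fun _ _ hx ↦ zero_lt_one.trans (one_lt_of_mem_ofGaps hx))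
        fun _ ↦ and_assoc.symm.trans mem_range_ofGaps_doublingGaps.symm
    _ = Nat.card {p : List ℕ × List ℕ // (ofGaps (stairGaps p.1 p.2)).sum = n} :=
      Nat.card_congr <| splitGapsEquiv.subtypeEquiv fun L ↦ by
        rw [← sum_ofGaps_stairGaps_splitGaps]
        rfl
    _ = _ := .symm <|
      card_partition_eq_card_sum_eq (ofGaps_injective.comp stairGaps_injective)
        (fun _ _ hx ↦ zero_lt_one.trans (one_lt_of_mem_ofGaps hx))
        fun π ↦ (isSeparated_and_isStaircase_parts_iff π).symm.trans mem_range_ofGaps_stairGaps.symm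
end

section
/- For every complex number q with |q| < 1, the sum over all nonnegative integers j of q^(2j^2+2j) · (q; q^2)_j · (-q^(2j+2); q)_∞ / ((q^2; q^2)_j) equals the product over all positive integers j with j not congruent to 0, 1, or −1 modulo 6 of 1/(1 − q^j). -/
/-- The finite q-Pochhammer symbol `(a; q)_n = ∏_{h=0}^{n-1} (1 - a q^h)`. -/
noncomputable def qPoch (a q : ℂ) (n : ℕ) : ℂ := ∏ h ∈ Finset.range n, (1 - a * q ^ h)

/-- The infinite q-Pochhammer symbol `(a; q)_∞ = ∏_{h=0}^{∞} (1 - a q^h)`. -/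
noncomputable def qPochInf (a q : ℂ) : ℂ := ∏' h : ℕ, (1 - a * q ^ h)

/-!
Writing the Jacobi theta series as `∑ θ_k` over `k : ℤ`, with `θ_k` a monomial in `x` and `w`, its
finite form is `∑ j, [m + n, j] θ_{j - n} = (x; xw)_m (w; xw)_n`, an induction on `n` from the
`q`-binomial theorem. Taken at `(n, n + 1)` it says that `α_r = θ_r + θ_{-(r + 1)}` and
`β_n = (x; xw)_n (w; xw)_{n + 1} / ((xw)²; xw)_{2n}` form a Bailey pair relative to `xw` with base
`xw`. The limit of `β` gives the triple product itself. The weak Bailey lemma, which is Cauchy's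
identity summed against `α`, multiplies `θ_k` by `(xw)^(k² + k)`, and the result is again a theta
series, with `x (xw)²` in place of `x`. For `x = w = q` this turns Slater's series into
`(q; q⁶)_∞ (q⁵; q⁶)_∞ (q⁶; q⁶)_∞ / (q; q)_∞`.
-/

open Filter Finset Topology

section qBinom

variable {R : Type*} [CommSemiring R]

/-- The Gaussian binomial coefficient as a polynomial in `q`, defined by the `q`-Pascal recursion so
that it makes sense (and satisfies the recursion) also where `(q; q)_n` vanishes. -/
def qBinom (q : R) : ℕ → ℕ → R
  | _, 0 => 1
  | 0, _ + 1 => 0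
  | n + 1, k + 1 => q ^ (k + 1) * qBinom q n (k + 1) + qBinom q n k

lemma qBinom_zero_right (q : R) (n : ℕ) : qBinom q n 0 = 1 := by
  cases n <;> rfl

lemma qBinom_succ_succ (q : R) (n k : ℕ) :
    qBinom q (n + 1) (k + 1) = q ^ (k + 1) * qBinom q n (k + 1) + qBinom q n k :=
  rfl

lemma qBinom_eq_zero_of_lt (q : R) {n k : ℕ} (h : n < k) : qBinom q n k = 0 := by
  induction n generalizing k with
  | zero =>
    obtain ⟨k, rfl⟩ := Nat.exists_eq_add_one.2 h
    rfl
  | succ n ih =>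
    obtain ⟨k, rfl⟩ := Nat.exists_eq_add_one.2 (Nat.zero_lt_of_lt h)
    rw [qBinom_succ_succ, ih (by lia), ih (by lia), mul_zero, add_zero]

lemma sum_qBinom_succ_mul (q : R) (n : ℕ) (f : ℕ → R) :
    ∑ k ∈ range (n + 2), qBinom q (n + 1) k * f k =
      ∑ k ∈ range (n + 1), qBinom q n k * (q ^ k * f k + f (k + 1)) := by
  have hshift : ∑ k ∈ range (n + 1), q ^ (k + 1) * qBinom q n (k + 1) * f (k + 1) + f 0 =
      ∑ k ∈ range (n + 1), q ^ k * qBinom q n k * f k := by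
    have h := sum_range_succ' (fun k ↦ q ^ k * qBinom q n k * f k) (n + 1)
    rw [sum_range_succ, qBinom_eq_zero_of_lt q n.lt_succ_self] at h
    simpa [qBinom_zero_right] using h.symm
  rw [sum_range_succ', qBinom_zero_right, one_mul]
  simp only [qBinom_succ_succ, add_mul, sum_add_distrib]
  rw [add_right_comm, hshift, ← sum_add_distrib]
  exact sum_congr rfl fun k _ ↦ by ring

end qBinom

section qPochhammer

lemma qPoch_zero (a q : ℂ) : qPoch a q 0 = 1 :=
  prod_range_zero _

lemma qPoch_succ (a q : ℂ) (n : ℕ) : qPoch a q (n + 1) = qPoch a q n * (1 - a * q ^ n) :=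
  prod_range_succ _ n

lemma qPoch_add (a q : ℂ) (m n : ℕ) :
    qPoch a q (m + n) = qPoch a q m * qPoch (a * q ^ m) q n := by
  simp only [qPoch, prod_range_add, pow_add, mul_assoc]

lemma qPoch_succ' (a q : ℂ) (n : ℕ) : qPoch a q (n + 1) = (1 - a) * qPoch (a * q) q n := by
  rw [add_comm, qPoch_add, pow_one, qPoch_succ, qPoch_zero, pow_zero, one_mul, mul_one]

lemma qPoch_sq_sq (a q : ℂ) (n : ℕ) : qPoch (a ^ 2) (q ^ 2) n = qPoch a q n * qPoch (-a) q n := by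
  simp only [qPoch, ← prod_mul_distrib]
  exact prod_congr rfl fun i _ ↦ by ring

lemma qPoch_ne_zero {a q : ℂ} (ha : ∀ k, a * q ^ k ≠ 1) (n : ℕ) : qPoch a q n ≠ 0 :=
  prod_ne_zero_iff.2 fun k _ ↦ sub_ne_zero.2 (ha k).symm

lemma qPoch_mul_eq_prod (a q : ℂ) (m n : ℕ) :
    qPoch a q (m * n) = ∏ i ∈ range m, qPoch (a * q ^ i) (q ^ m) n := by
  induction n with
  | zero => simp [qPoch_zero]
  | succ n ih =>
    simp only [Nat.mul_succ, qPoch_add, ih, qPoch_succ, prod_mul_distrib]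
    congr 1
    exact prod_congr rfl fun i _ ↦ by ring

lemma qBinom_mul_qPoch_mul_qPoch (q : ℂ) (m n : ℕ) :
    qBinom q (m + n) m * (qPoch q q m * qPoch q q n) = qPoch q q (m + n) := by
  induction m generalizing n with
  | zero => simp [qBinom_zero_right, qPoch_zero]
  | succ m ihm =>
    induction n with
    | zero =>
      have h := ihm 0
      simp only [qPoch_zero, mul_one, add_zero] at h ⊢
      rw [qBinom_succ_succ, qBinom_eq_zero_of_lt q m.lt_succ_self, qPoch_succ]
      linear_combination (1 - q * q ^ m) * h
    | succ n ihn =>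
      have h := ihm (n + 1)
      rw [show m + 1 + n = m + n + 1 by ring] at ihn
      rw [show m + (n + 1) = m + n + 1 by ring] at h
      rw [show m + 1 + (n + 1) = m + n + 1 + 1 by ring, qBinom_succ_succ,
        qPoch_succ q q (m + n + 1), ← ihn, qPoch_succ q q n, qPoch_succ q q m]
      rw [← ihn, qPoch_succ q q n, qPoch_succ q q m] at h
      linear_combination (1 - q * q ^ m) * h

lemma qBinom_eq_mul_inv {q : ℂ} (hq : ∀ k, q * q ^ k ≠ 1) (m n : ℕ) :
    qBinom q (m + n) m = qPoch q q (m + n) * (qPoch q q m)⁻¹ * (qPoch q q n)⁻¹ := by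
  rw [← qBinom_mul_qPoch_mul_qPoch, mul_assoc, ← mul_inv,
    mul_inv_cancel_right₀ (mul_ne_zero (qPoch_ne_zero hq m) (qPoch_ne_zero hq n))]

lemma qBinom_symm {q : ℂ} (hq : ∀ k, q * q ^ k ≠ 1) (m n : ℕ) :
    qBinom q (m + n) m = qBinom q (m + n) n := by
  rw [qBinom_eq_mul_inv hq, add_comm m n, qBinom_eq_mul_inv hq, mul_right_comm]

lemma qBinom_theorem (q z : ℂ) (n : ℕ) :
    ∑ k ∈ range (n + 1), qBinom q n k * ((-1) ^ k * q ^ k.choose 2 * z ^ k) = qPoch z q n := by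
  induction n generalizing z with
  | zero => simp [qBinom_zero_right, qPoch_zero]
  | succ n ih =>
    rw [sum_qBinom_succ_mul, qPoch_succ', ← ih, mul_sum]
    refine sum_congr rfl fun k _ ↦ ?_
    rw [Nat.choose_succ_succ' k 1, Nat.choose_one_right]
    ring

lemma sum_qBinom_mul_div_qPoch {a q : ℂ} (ha : ∀ k, a * q * q ^ k ≠ 1) (n : ℕ) :
    ∑ k ∈ range (n + 1), qBinom q n k * (q ^ k ^ 2 * a ^ k / qPoch (a * q) q k) =
      (qPoch (a * q) q n)⁻¹ := by
  induction n generalizing a with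
  | zero => simp [qBinom_zero_right, qPoch_zero]
  | succ n ih =>
    have haq (k : ℕ) : a * q * q * q ^ k ≠ 1 := by
      simpa only [pow_succ', mul_assoc] using ha (k + 1)
    rw [sum_qBinom_succ_mul, qPoch_succ', mul_inv, ← ih haq, mul_sum]
    refine sum_congr rfl fun k _ ↦ ?_
    have hk : 1 - a * q * q ^ k ≠ 0 := sub_ne_zero.2 (ha k).symm
    have hterm : q ^ k * (q ^ k ^ 2 * a ^ k / qPoch (a * q) q k) +
        q ^ (k + 1) ^ 2 * a ^ (k + 1) / qPoch (a * q) q (k + 1) =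
        q ^ k ^ 2 * (a * q) ^ k / qPoch (a * q) q (k + 1) := by
      rw [← mul_div_mul_right _ (qPoch (a * q) q k) hk, qPoch_succ]
      ring
    rw [hterm, qPoch_succ', div_eq_mul_inv, mul_inv]
    ring

end qPochhammer

/-- The coefficient `(-1) ^ k * x ^ (k * (k + 1) / 2) * w ^ (k * (k - 1) / 2)` of Ramanujan's theta
function `f(-x, -w)`, for `k : ℤ`. Writing it with powers of `x * w` keeps all exponents natural, so
that neither `x` nor `w` has to be invertible. -/
def thetaCoeff {R : Type*} [CommRing R] (x w : R) : ℤ → R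
  | Int.ofNat n => (-1) ^ n * (x * w) ^ n.choose 2 * x ^ n
  | Int.negSucc n => (-1) ^ (n + 1) * (x * w) ^ (n + 1).choose 2 * w ^ (n + 1)

section thetaCoeff

variable {R : Type*} [CommRing R] (x w : R)

lemma thetaCoeff_natCast (n : ℕ) :
    thetaCoeff x w n = (-1) ^ n * (x * w) ^ n.choose 2 * x ^ n :=
  rfl

lemma thetaCoeff_neg (k : ℤ) : thetaCoeff x w (-k) = thetaCoeff w x k := by
  rcases k with (_ | n) | n
  · simp [thetaCoeff]
  · change thetaCoeff x w (Int.negSucc n) = thetaCoeff w x (Int.ofNat (n + 1))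
    simp only [thetaCoeff, mul_comm x w]
  · change thetaCoeff x w (Int.ofNat (n + 1)) = thetaCoeff w x (Int.negSucc n)
    simp only [thetaCoeff, mul_comm x w]

lemma thetaCoeff_natCast_succ (n : ℕ) :
    thetaCoeff x w (n + 1) = -(x * (x * w) ^ n * thetaCoeff x w n) := by
  rw [← Nat.cast_succ, thetaCoeff_natCast, thetaCoeff_natCast, Nat.succ_eq_add_one,
    Nat.choose_succ_succ' n 1, Nat.choose_one_right]
  ring

lemma pow_mul_thetaCoeff_sub_sub_one (j n : ℕ) :
    (x * w) ^ j * thetaCoeff x w (j - n - 1) = -(w * (x * w) ^ n * thetaCoeff x w (j - n)) := by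
  rcases lt_or_ge n j with h | h
  · obtain ⟨k, rfl⟩ := Nat.exists_eq_add_of_lt h
    rw [show ((n + k + 1 : ℕ) : ℤ) - n - 1 = k by push_cast; ring,
      show ((n + k + 1 : ℕ) : ℤ) - n = k + 1 by push_cast; ring, thetaCoeff_natCast_succ]
    ring
  · obtain ⟨k, rfl⟩ := Nat.exists_eq_add_of_le h
    rw [show (j : ℤ) - (j + k : ℕ) - 1 = -(k + 1) by push_cast; ring,
      show (j : ℤ) - (j + k : ℕ) = -k by push_cast; ring, thetaCoeff_neg, thetaCoeff_neg,
      thetaCoeff_natCast_succ]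
    ring

lemma pow_sq_mul_pow_mul_thetaCoeff (r : ℕ) :
    (x * w) ^ r ^ 2 * (x * w) ^ r * thetaCoeff x w r = thetaCoeff (x * (x * w) ^ 2) w r := by
  induction r with
  | zero =>
    rw [thetaCoeff_natCast, thetaCoeff_natCast]
    simp
  | succ r ih =>
    rw [Nat.cast_succ, thetaCoeff_natCast_succ, thetaCoeff_natCast_succ, ← ih]
    ring

lemma pow_sq_mul_pow_mul_thetaCoeff_neg (r : ℕ) :
    (x * w) ^ r ^ 2 * (x * w) ^ r * thetaCoeff x w (-(r + 1)) =
      thetaCoeff (x * (x * w) ^ 2) w (-(r + 1)) := by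
  simp only [thetaCoeff_neg, ← Nat.cast_succ]
  induction r with
  | zero =>
    rw [thetaCoeff_natCast, thetaCoeff_natCast]
    simp
  | succ r ih =>
    rw [Nat.cast_succ (r + 1), thetaCoeff_natCast_succ, thetaCoeff_natCast_succ, ← ih]
    ring

end thetaCoeff

lemma finite_jacobi_triple_product (x w : ℂ) (m n : ℕ) :
    ∑ j ∈ range (m + n + 1), qBinom (x * w) (m + n) j * thetaCoeff x w (j - n) =
      qPoch x (x * w) m * qPoch w (x * w) n := by
  induction n with
  | zero => simp [thetaCoeff_natCast, qBinom_theorem, qPoch_zero]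
  | succ n ih =>
    rw [← add_assoc, sum_qBinom_succ_mul, qPoch_succ, ← mul_assoc, ← ih, sum_mul]
    refine sum_congr rfl fun j _ ↦ ?_
    have h := pow_mul_thetaCoeff_sub_sub_one x w j n
    rw [show (j : ℤ) - (n + 1 : ℕ) = j - n - 1 by push_cast; ring,
      show ((j + 1 : ℕ) : ℤ) - (n + 1 : ℕ) = j - n by push_cast; ring, h]
    ring

section qPochhammerInf

lemma mul_pow_ne_one {a q : ℂ} (ha : ‖a‖ < 1) (hq : ‖q‖ < 1) (k : ℕ) : a * q ^ k ≠ 1 := by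
  intro h
  have h' : ‖a‖ * ‖q‖ ^ k = 1 := by rw [← norm_pow, ← norm_mul, h, norm_one]
  exact (mul_lt_one_of_nonneg_of_lt_one_left (norm_nonneg a) ha
    (pow_le_one₀ (norm_nonneg q) hq.le)).ne h'

lemma norm_pow_lt_one {q : ℂ} (hq : ‖q‖ < 1) {m : ℕ} (hm : m ≠ 0) : ‖q ^ m‖ < 1 :=
  norm_pow q m ▸ pow_lt_one₀ (norm_nonneg q) hq hm

variable {q : ℂ} (hq : ‖q‖ < 1)
include hq

lemma summable_norm_neg_mul_pow (a : ℂ) : Summable fun h : ℕ ↦ ‖-(a * q ^ h)‖ := by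
  simpa only [norm_neg, norm_mul, norm_pow] using
    (summable_geometric_of_lt_one (norm_nonneg q) hq).mul_left ‖a‖

lemma hasProd_qPochInf (a : ℂ) : HasProd (fun h ↦ 1 - a * q ^ h) (qPochInf a q) := by
  simpa only [qPochInf, sub_eq_add_neg] using
    (multipliable_one_add_of_summable (summable_norm_neg_mul_pow hq a)).hasProd

lemma tendsto_qPoch (a : ℂ) : Tendsto (qPoch a q) atTop (𝓝 (qPochInf a q)) :=
  (hasProd_qPochInf hq a).tendsto_prod_nat

lemma qPochInf_ne_zero {a : ℂ} (ha : ∀ k, a * q ^ k ≠ 1) : qPochInf a q ≠ 0 := by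
  simpa only [qPochInf, sub_eq_add_neg] using tprod_one_add_ne_zero_of_summable
    (fun k ↦ by simpa only [← sub_eq_add_neg] using sub_ne_zero.2 (ha k).symm)
    (summable_norm_neg_mul_pow hq a)

lemma qPochInf_eq_qPoch_mul (a : ℂ) (m : ℕ) :
    qPochInf a q = qPoch a q m * qPochInf (a * q ^ m) q := by
  refine tendsto_nhds_unique ((tendsto_qPoch hq a).comp (tendsto_add_atTop_nat m)) ?_
  simpa only [Function.comp_def, add_comm _ m, qPoch_add] using
    (tendsto_qPoch hq (a * q ^ m)).const_mul (qPoch a q m)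

lemma qPochInf_sq_sq (a : ℂ) : qPochInf (a ^ 2) (q ^ 2) = qPochInf a q * qPochInf (-a) q := by
  refine tendsto_nhds_unique (tendsto_qPoch (norm_pow_lt_one hq two_ne_zero) _) ?_
  simpa only [← qPoch_sq_sq] using (tendsto_qPoch hq a).mul (tendsto_qPoch hq (-a))

lemma qPochInf_eq_prod (a : ℂ) {m : ℕ} (hm : m ≠ 0) :
    qPochInf a q = ∏ i ∈ range m, qPochInf (a * q ^ i) (q ^ m) := by
  have hmul : Tendsto (fun n ↦ m * n) atTop atTop :=
    tendsto_id.const_mul_atTop' (Nat.pos_of_ne_zero hm)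
  refine tendsto_nhds_unique ((tendsto_qPoch hq a).comp hmul) ?_
  simpa only [Function.comp_def, qPoch_mul_eq_prod] using
    tendsto_finsetProd (range m) fun i _ ↦ tendsto_qPoch (norm_pow_lt_one hq hm) (a * q ^ i)

lemma tendsto_inv_qPoch {a : ℂ} (ha : ∀ k, a * q ^ k ≠ 1) :
    Tendsto (fun n ↦ (qPoch a q n)⁻¹) atTop (𝓝 (qPochInf a q)⁻¹) :=
  (tendsto_qPoch hq a).inv₀ (qPochInf_ne_zero hq ha)

lemma exists_norm_inv_qPoch_le {a : ℂ} (ha : ∀ k, a * q ^ k ≠ 1) :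
    ∃ C, ∀ n, ‖(qPoch a q n)⁻¹‖ ≤ C := by
  obtain ⟨C, hC⟩ := (tendsto_inv_qPoch hq ha).norm.bddAbove_range
  exact ⟨C, fun n ↦ hC ⟨n, rfl⟩⟩

lemma tprod_inv_one_sub_pow_mod_mem {m : ℕ} {R : Finset ℕ} (hR : ∀ i ∈ R, i ≠ 0 ∧ i < m) :
    ∏' j : {j : ℕ // j % m ∈ R}, (1 - q ^ (j : ℕ))⁻¹ =
      ∏ i ∈ R, (qPochInf (q ^ i) (q ^ m))⁻¹ := by
  let progression (i : ℕ) : Set ℕ := Set.range fun h ↦ i + m * h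
  have hmem {i j : ℕ} (hi : i ∈ R) : j ∈ progression i ↔ j % m = i := by
    refine ⟨?_, fun h ↦ ⟨j / m, h ▸ Nat.mod_add_div j m⟩⟩
    rintro ⟨h, rfl⟩
    rw [Nat.add_mul_mod_self_left, Nat.mod_eq_of_lt (hR i hi).2]
  have hunion : {j | j % m ∈ R} = ⋃ i ∈ R, progression i := by
    ext j
    simp only [Set.mem_ofPred_eq, Set.mem_iUnion₂, exists_prop]
    exact ⟨fun h ↦ ⟨j % m, h, (hmem h).2 rfl⟩, fun ⟨i, hi, h⟩ ↦ (hmem hi).1 h ▸ hi⟩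
  have hdisjoint : (R : Set ℕ).Pairwise (Function.onFun Disjoint progression) :=
    fun i hi i' hi' hne ↦ Set.disjoint_left.2 fun j hj hj' ↦
      hne (((hmem hi).1 hj).symm.trans ((hmem hi').1 hj'))
  have hprod (i : ℕ) (hi : i ∈ R) :
      HasProd ((fun j ↦ (1 - q ^ j)⁻¹) ∘ ((↑) : progression i → ℕ))
        (qPochInf (q ^ i) (q ^ m))⁻¹ := by
    have hm : m ≠ 0 := Nat.ne_zero_of_lt (hR i hi).2
    have hinj : Function.Injective fun h ↦ i + m * h :=
      (add_right_injective i).comp (mul_right_injective₀ hm)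
    have hqi := norm_pow_lt_one hq (hR i hi).1
    have hqm := norm_pow_lt_one hq hm
    refine (hinj.hasProd_range_iff (f := fun j ↦ (1 - q ^ j)⁻¹)).2 ?_
    simpa only [Function.comp_def, pow_add, pow_mul] using
      (hasProd_qPochInf hqm (q ^ i)).inv₀ (qPochInf_ne_zero hqm (mul_pow_ne_one hqi hqm))
  exact (tprod_congr_set_coe (fun j ↦ (1 - q ^ j)⁻¹) hunion).trans
    (hasProd_prod_disjoint R hdisjoint hprod).tprod_eq

lemma tendsto_qBinom (k : ℕ) :
    Tendsto (fun n ↦ qBinom q n k) atTop (𝓝 (qPoch q q k)⁻¹) := by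
  have hq' := mul_pow_ne_one hq hq
  have hlim := ((tendsto_qPoch hq q).mul_const (qPoch q q k)⁻¹).mul
    ((tendsto_inv_qPoch hq hq').comp (tendsto_sub_atTop_nat k))
  rw [mul_right_comm, mul_inv_cancel₀ (qPochInf_ne_zero hq hq'), one_mul] at hlim
  refine hlim.congr' ?_
  filter_upwards [eventually_ge_atTop k] with n hn
  obtain ⟨m, rfl⟩ := Nat.exists_eq_add_of_le hn
  rw [qBinom_eq_mul_inv hq', Function.comp_apply, Nat.add_sub_cancel_left]

lemma exists_norm_qBinom_le : ∃ C, ∀ n k, ‖qBinom q n k‖ ≤ C := by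
  have hq' := mul_pow_ne_one hq hq
  obtain ⟨A, hA⟩ := (tendsto_qPoch hq q).norm.bddAbove_range
  obtain ⟨B, hB⟩ := exists_norm_inv_qPoch_le hq hq'
  have hA (n : ℕ) : ‖qPoch q q n‖ ≤ A := hA ⟨n, rfl⟩
  have hA₀ : 0 ≤ A := (norm_nonneg _).trans (hA 0)
  have hB₀ : 0 ≤ B := (norm_nonneg _).trans (hB 0)
  refine ⟨A * B * B, fun n k ↦ ?_⟩
  rcases lt_or_ge n k with h | h
  · rw [qBinom_eq_zero_of_lt q h, norm_zero]
    positivity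
  · obtain ⟨m, rfl⟩ := Nat.exists_eq_add_of_le h
    rw [qBinom_eq_mul_inv hq', norm_mul, norm_mul]
    gcongr
    exacts [hA _, hB k, hB m]

lemma summable_of_succ_eq_mul_pow_mul {f : ℕ → ℂ} (z : ℂ)
    (hf : ∀ n, f (n + 1) = z * q ^ n * f n) : Summable f := by
  have hlim : Tendsto (fun n ↦ ‖z * q ^ n‖) atTop (𝓝 0) := by
    simpa using ((tendsto_pow_atTop_nhds_zero_of_norm_lt_one hq).const_mul z).norm
  refine summable_of_ratio_norm_eventually_le one_half_lt_one ?_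
  filter_upwards [hlim.eventually_le_const one_half_pos] with n hn
  rw [hf, norm_mul]
  gcongr

lemma summable_pow_sq_mul_pow (a : ℂ) : Summable fun n : ℕ ↦ q ^ n ^ 2 * a ^ n :=
  summable_of_succ_eq_mul_pow_mul (norm_pow_lt_one hq two_ne_zero) (q * a) fun n ↦ by ring

lemma cauchy_identity {a : ℂ} (ha : ∀ k, a * q * q ^ k ≠ 1) :
    ∑' k, q ^ k ^ 2 * a ^ k / (qPoch q q k * qPoch (a * q) q k) = (qPochInf (a * q) q)⁻¹ := by
  obtain ⟨A, hA⟩ := exists_norm_qBinom_le hq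
  obtain ⟨B, hB⟩ := exists_norm_inv_qPoch_le hq ha
  have hA₀ : 0 ≤ A := (norm_nonneg _).trans (hA 0 0)
  have hlim := tendsto_tsum_of_dominated_convergence (𝓕 := atTop)
    (f := fun n k ↦ qBinom q n k * (q ^ k ^ 2 * a ^ k / qPoch (a * q) q k))
    (((summable_pow_sq_mul_pow hq a).norm.mul_right B).mul_left A)
    (fun k ↦ (tendsto_qBinom hq k).mul_const _)
    (.of_forall fun n k ↦ by
      rw [norm_mul, div_eq_mul_inv, norm_mul]
      gcongr
      exacts [hA n k, hB k])
  refine (tsum_congr fun k ↦ ?_).trans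
    (tendsto_nhds_unique (hlim.congr fun n ↦ ?_) (tendsto_inv_qPoch hq ha))
  · ring
  · rw [← sum_qBinom_mul_div_qPoch ha n]
    refine tsum_eq_sum fun k hk ↦ ?_
    rw [qBinom_eq_zero_of_lt q (by simpa [Nat.lt_succ_iff] using hk), zero_mul]

end qPochhammerInf

/-- `(α, β)` is a Bailey pair relative to `a`: `β` is obtained from `α` by the triangular system
`β_n = ∑_{r ≤ n} α_r / ((q; q)_{n-r} (aq; q)_{n+r})`, whose sum is indexed here by the pairs
`(r, n - r)`. -/
def IsBaileyPair (a q : ℂ) (α β : ℕ → ℂ) : Prop :=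
  ∀ n, β n = ∑ p ∈ antidiagonal n, α p.1 / (qPoch q q p.2 * qPoch (a * q) q (n + p.1))

lemma hasSum_sum_antidiagonal {f : ℕ × ℕ → ℂ} (hf : Summable f) :
    HasSum (fun n ↦ ∑ p ∈ antidiagonal n, f p) (∑' p, f p) := by
  refine (HasAntidiagonal.sigmaAntidiagonalEquivProd.hasSum_iff.2 hf.hasSum).sigma fun n ↦ ?_
  rw [← sum_coe_sort]
  exact hasSum_fintype _

lemma cauchy_identity_shift {a q : ℂ} (hq : ‖q‖ < 1) (ha : ∀ k, a * q * q ^ k ≠ 1) (s : ℕ) :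
    ∑' m, q ^ m ^ 2 * (a * q ^ s) ^ m / (qPoch q q m * qPoch (a * q) q (s + m)) =
      (qPochInf (a * q) q)⁻¹ := by
  have has (k : ℕ) : a * q ^ s * q * q ^ k ≠ 1 := by
    simpa only [pow_add, mul_assoc, mul_left_comm] using ha (s + k)
  rw [qPochInf_eq_qPoch_mul hq (a * q) s, mul_right_comm a q (q ^ s), mul_inv,
    ← cauchy_identity hq has, ← tsum_mul_left]
  refine tsum_congr fun m ↦ ?_
  rw [qPoch_add, mul_right_comm a q (q ^ s)]
  ring

namespace IsBaileyPair

variable {a q : ℂ} {α β : ℕ → ℂ}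

lemma tsum_pow_sq_mul_pow_mul_eq (h : IsBaileyPair a q α β) (hq : ‖q‖ < 1)
    (ha : ∀ k, a * q * q ^ k ≠ 1) (hα : Summable fun r ↦ q ^ r ^ 2 * a ^ r * α r) :
    ∑' n, q ^ n ^ 2 * a ^ n * β n =
      (∑' r, q ^ r ^ 2 * a ^ r * α r) * (qPochInf (a * q) q)⁻¹ := by
  let F (p : ℕ × ℕ) : ℂ := q ^ p.1 ^ 2 * a ^ p.1 * α p.1 *
    (q ^ p.2 ^ 2 * (a * q ^ (2 * p.1)) ^ p.2 /
      (qPoch q q p.2 * qPoch (a * q) q (2 * p.1 + p.2)))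
  have hF : Summable F := by
    obtain ⟨A, hA⟩ := exists_norm_inv_qPoch_le hq (mul_pow_ne_one hq hq)
    obtain ⟨B, hB⟩ := exists_norm_inv_qPoch_le hq ha
    have hA₀ : 0 ≤ A := (norm_nonneg _).trans (hA 0)
    have hmajorant := hα.norm.mul_of_nonneg ((summable_pow_sq_mul_pow hq a).norm.mul_right (A * B))
      (fun _ ↦ norm_nonneg _) fun m ↦ mul_nonneg (norm_nonneg _)
        (mul_nonneg hA₀ ((norm_nonneg _).trans (hB 0)))
    refine hmajorant.of_norm_bounded fun ⟨r, m⟩ ↦ ?_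
    have hpow : ‖q ^ m ^ 2 * (a * q ^ (2 * r)) ^ m‖ ≤ ‖q ^ m ^ 2 * a ^ m‖ := by
      rw [mul_pow, ← mul_assoc, norm_mul, ← pow_mul, norm_pow q (2 * r * m)]
      exact mul_le_of_le_one_right (norm_nonneg _) (pow_le_one₀ (norm_nonneg _) hq.le)
    simp only [F, div_eq_mul_inv, mul_inv]
    rw [norm_mul, norm_mul (q ^ m ^ 2 * _), norm_mul (qPoch q q m)⁻¹]
    gcongr
    exacts [hA m, hB _]
  calc ∑' n, q ^ n ^ 2 * a ^ n * β n = ∑' n, ∑ p ∈ antidiagonal n, F p := by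
        refine tsum_congr fun n ↦ ?_
        rw [h n, mul_sum]
        refine sum_congr rfl fun p hp ↦ ?_
        obtain rfl : p.1 + p.2 = n := mem_antidiagonal.1 hp
        rw [show p.1 + p.2 + p.1 = 2 * p.1 + p.2 by ring]
        ring
    _ = ∑' p, F p := (hasSum_sum_antidiagonal hF).tsum_eq
    _ = (∑' r, q ^ r ^ 2 * a ^ r * α r) * (qPochInf (a * q) q)⁻¹ := by
        rw [hF.tsum_prod, ← tsum_mul_right]
        refine tsum_congr fun r ↦ ?_
        simp only [F, tsum_mul_left, cauchy_identity_shift hq ha]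

lemma tendsto (h : IsBaileyPair a q α β) (hq : ‖q‖ < 1) (ha : ∀ k, a * q * q ^ k ≠ 1)
    (hα : Summable α) :
    Tendsto β atTop (𝓝 ((∑' r, α r) * ((qPochInf q q)⁻¹ * (qPochInf (a * q) q)⁻¹))) := by
  have hq' := mul_pow_ne_one hq hq
  obtain ⟨A, hA⟩ := exists_norm_inv_qPoch_le hq hq'
  obtain ⟨B, hB⟩ := exists_norm_inv_qPoch_le hq ha
  have hA₀ : 0 ≤ A := (norm_nonneg _).trans (hA 0)
  let term (n r : ℕ) : ℂ := α r * ((qPoch q q (n - r))⁻¹ * (qPoch (a * q) q (n + r))⁻¹)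
  have hβ (n : ℕ) : ∑' r, (↑(range (n + 1)) : Set ℕ).indicator (term n) r = β n := by
    rw [← sum_eq_tsum_indicator, h n, Nat.sum_antidiagonal_eq_sum_range_succ_mk]
    exact sum_congr rfl fun r _ ↦ by rw [div_eq_mul_inv, mul_inv]
  rw [← tsum_mul_right]
  refine (tendsto_tsum_of_dominated_convergence (hα.norm.mul_right (A * B))
    (fun r ↦ ?_) (.of_forall fun n r ↦ ?_)).congr hβ
  · have hlim : Tendsto (term · r) atTop
        (𝓝 (α r * ((qPochInf q q)⁻¹ * (qPochInf (a * q) q)⁻¹))) :=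
      (((tendsto_inv_qPoch hq hq').comp (tendsto_sub_atTop_nat r)).mul
        ((tendsto_inv_qPoch hq ha).comp (tendsto_add_atTop_nat r))).const_mul (α r)
    refine hlim.congr' ?_
    filter_upwards [eventually_ge_atTop r] with n hn
    rw [Set.indicator_of_mem (by simpa [Nat.lt_succ_iff] using hn)]
  · refine (norm_indicator_le_norm_self _ r).trans ?_
    rw [norm_mul, norm_mul]
    gcongr
    exacts [hA _, hB _]

end IsBaileyPair

lemma qPoch_mul_qPoch_succ_eq_sum_antidiagonal {x w : ℂ} (hxw : ‖x * w‖ < 1) (n : ℕ) :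
    qPoch x (x * w) n * qPoch w (x * w) (n + 1) =
      ∑ p ∈ antidiagonal n, qBinom (x * w) (2 * n + 1) p.2 *
        (thetaCoeff x w p.1 + thetaCoeff x w (-(p.1 + 1))) := by
  rw [← finite_jacobi_triple_product, show n + (n + 1) + 1 = n + 1 + (n + 1) by ring,
    sum_range_add, ← sum_flip, ← sum_add_distrib, Nat.sum_antidiagonal_eq_sum_range_succ_mk]
  refine sum_congr rfl fun r hr ↦ ?_
  obtain ⟨m, rfl⟩ := Nat.exists_eq_add_of_le (mem_range_succ_iff.1 hr)
  have hsymm : qBinom (x * w) (2 * (r + m) + 1) (r + m + 1 + r) =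
      qBinom (x * w) (2 * (r + m) + 1) m := by
    rw [show 2 * (r + m) + 1 = m + (r + m + 1 + r) by ring]
    exact (qBinom_symm (mul_pow_ne_one hxw hxw) m _).symm
  rw [show r + m + (r + m + 1) = 2 * (r + m) + 1 by ring, Nat.add_sub_cancel_left, hsymm,
    show (m : ℤ) - (r + m + 1 : ℕ) = -(r + 1) by push_cast; ring,
    show ((r + m + 1 + r : ℕ) : ℤ) - (r + m + 1 : ℕ) = r by push_cast; ring]
  ring

lemma isBaileyPair_thetaCoeff {x w : ℂ} (hxw : ‖x * w‖ < 1) :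
    IsBaileyPair (x * w) (x * w)
      (fun r ↦ thetaCoeff x w r + thetaCoeff x w (-(r + 1)))
      (fun n ↦ qPoch x (x * w) n * qPoch w (x * w) (n + 1) /
        qPoch (x * w * (x * w)) (x * w) (2 * n)) := by
  intro n
  have hxw' := mul_pow_ne_one hxw hxw
  have hne := qPoch_ne_zero hxw'
  have hone : 1 - x * w ≠ 0 := sub_ne_zero.2 (by simpa using (hxw' 0).symm)
  have hpoch (k : ℕ) : qPoch (x * w * (x * w)) (x * w) k =
      qPoch (x * w) (x * w) (k + 1) / (1 - x * w) := by
    rw [qPoch_succ', mul_div_cancel_left₀ _ hone]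
  simp only [qPoch_mul_qPoch_succ_eq_sum_antidiagonal hxw, hpoch, sum_div]
  refine sum_congr rfl fun p hp ↦ ?_
  obtain rfl : p.1 + p.2 = n := mem_antidiagonal.1 hp
  rw [show 2 * (p.1 + p.2) + 1 = p.2 + (p.1 + p.2 + p.1 + 1) by ring, qBinom_eq_mul_inv hxw']
  have := hne (p.2 + (p.1 + p.2 + p.1 + 1))
  field_simp

lemma summable_thetaCoeff {x w : ℂ} (hxw : ‖x * w‖ < 1) : Summable (thetaCoeff x w) := by
  have hnat {x w : ℂ} (hxw : ‖x * w‖ < 1) : Summable fun n : ℕ ↦ thetaCoeff x w n :=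
    summable_of_succ_eq_mul_pow_mul hxw (-x) fun n ↦ by
      rw [Nat.cast_succ, thetaCoeff_natCast_succ]
      ring
  refine .of_nat_of_neg (hnat hxw) ?_
  simpa only [thetaCoeff_neg] using hnat (mul_comm x w ▸ hxw)

theorem jacobi_triple_product {x w : ℂ} (hxw : ‖x * w‖ < 1) :
    ∑' k, thetaCoeff x w k =
      qPochInf x (x * w) * qPochInf w (x * w) * qPochInf (x * w) (x * w) := by
  have hB := mul_pow_ne_one hxw hxw
  have hBB (k : ℕ) : x * w * (x * w) * (x * w) ^ k ≠ 1 := by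
    simpa only [pow_succ', mul_assoc] using hB (k + 1)
  have hfold := (summable_thetaCoeff hxw).hasSum.nat_add_neg_add_one
  have hlim := ((tendsto_qPoch hxw x).mul
    ((tendsto_qPoch hxw w).comp (tendsto_add_atTop_nat 1))).mul
    ((tendsto_inv_qPoch hxw hBB).comp (tendsto_id.const_mul_atTop' two_pos))
  have heq := tendsto_nhds_unique
    ((isBaileyPair_thetaCoeff hxw).tendsto hxw hBB hfold.summable) hlim
  have h₁ := qPochInf_ne_zero hxw hB
  have h₂ := qPochInf_ne_zero hxw hBB
  rw [hfold.tsum_eq, ← mul_assoc] at heq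
  rw [← div_eq_iff h₁]
  exact mul_right_cancel₀ (inv_ne_zero h₂) heq

theorem tsum_qPoch_mul_qPoch_div {x w : ℂ} (hxw : ‖x * w‖ < 1) :
    ∑' n, (x * w) ^ n ^ 2 * (x * w) ^ n *
        (qPoch x (x * w) n * qPoch w (x * w) (n + 1) /
          qPoch (x * w * (x * w)) (x * w) (2 * n)) =
      qPochInf (x * (x * w) ^ 2) ((x * w) ^ 3) * qPochInf w ((x * w) ^ 3) *
        qPochInf ((x * w) ^ 3) ((x * w) ^ 3) * (qPochInf (x * w * (x * w)) (x * w))⁻¹ := by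
  have hcube : x * (x * w) ^ 2 * w = (x * w) ^ 3 := by ring
  have hnorm : ‖x * (x * w) ^ 2 * w‖ < 1 := hcube ▸ norm_pow_lt_one hxw three_ne_zero
  have hθ := (summable_thetaCoeff hnorm).hasSum.nat_add_neg_add_one
  have hα (r : ℕ) : (x * w) ^ r ^ 2 * (x * w) ^ r *
      (thetaCoeff x w r + thetaCoeff x w (-(r + 1))) =
      thetaCoeff (x * (x * w) ^ 2) w r + thetaCoeff (x * (x * w) ^ 2) w (-(r + 1)) := by
    rw [mul_add, pow_sq_mul_pow_mul_thetaCoeff, pow_sq_mul_pow_mul_thetaCoeff_neg]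
  have hne (k : ℕ) : x * w * (x * w) * (x * w) ^ k ≠ 1 := by
    simpa only [pow_succ', mul_assoc] using mul_pow_ne_one hxw hxw (k + 1)
  rw [(isBaileyPair_thetaCoeff hxw).tsum_pow_sq_mul_pow_mul_eq hxw hne
    (by simpa only [hα] using hθ.summable)]
  simp only [hα]
  rw [hθ.tsum_eq, jacobi_triple_product hnorm, hcube]

lemma qPoch_self_two_mul_add_one (q : ℂ) (n : ℕ) :
    qPoch q q (2 * n + 1) = qPoch q (q ^ 2) (n + 1) * qPoch (q ^ 2) (q ^ 2) n := by
  rw [qPoch_succ, qPoch_mul_eq_prod, prod_range_succ, prod_range_one, qPoch_succ, pow_zero, mul_one,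
    pow_one, ← pow_two, ← pow_mul, mul_right_comm]

lemma pow_mul_qPoch_mul_qPochInf_div_qPoch {q : ℂ} (hq : ‖q‖ < 1) (j : ℕ) :
    q ^ (2 * j ^ 2 + 2 * j) * qPoch q (q ^ 2) j * qPochInf (-(q ^ (2 * j + 2))) q /
        qPoch (q ^ 2) (q ^ 2) j =
      qPochInf (-q) q / (1 - q ^ 2) * ((q ^ 2) ^ j ^ 2 * (q ^ 2) ^ j *
        (qPoch q (q ^ 2) j * qPoch q (q ^ 2) (j + 1) /
          qPoch (q ^ 2 * q ^ 2) (q ^ 2) (2 * j))) := by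
  have hq₂ := norm_pow_lt_one hq two_ne_zero
  have hpoch := qPoch_ne_zero (mul_pow_ne_one hq₂ hq₂)
  have htail : qPochInf (-q) q = qPoch (-q) q (2 * j + 1) * qPochInf (-q ^ (2 * j + 2)) q := by
    rw [qPochInf_eq_qPoch_mul hq (-q) (2 * j + 1), neg_mul, ← pow_succ']
  have hsplit : (1 - q ^ 2) * qPoch (q ^ 2 * q ^ 2) (q ^ 2) (2 * j) =
      qPoch q (q ^ 2) (j + 1) * qPoch (q ^ 2) (q ^ 2) j * qPoch (-q) q (2 * j + 1) := by
    rw [← qPoch_succ', qPoch_sq_sq, qPoch_self_two_mul_add_one]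
  have hne : (1 - q ^ 2) * qPoch (q ^ 2 * q ^ 2) (q ^ 2) (2 * j) ≠ 0 := by
    rw [← qPoch_succ']
    exact hpoch _
  rw [htail, div_eq_iff (hpoch j), ← mul_div_assoc, div_mul_div_comm, div_mul_eq_mul_div,
    eq_div_iff hne, hsplit]
  ring

lemma tprod_inv_one_sub_pow_mod_six {q : ℂ} (hq : ‖q‖ < 1) :
    ∏' j : {j : ℕ // 0 < j ∧ j % 6 ≠ 0 ∧ j % 6 ≠ 1 ∧ j % 6 ≠ 5}, (1 - q ^ (j : ℕ))⁻¹ =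
      (qPochInf (q ^ 2) (q ^ 6))⁻¹ * (qPochInf (q ^ 3) (q ^ 6))⁻¹ *
        (qPochInf (q ^ 4) (q ^ 6))⁻¹ := by
  have hset : {j | 0 < j ∧ j % 6 ≠ 0 ∧ j % 6 ≠ 1 ∧ j % 6 ≠ 5} =
      {j | j % 6 ∈ ({2, 3, 4} : Finset ℕ)} := by
    ext j
    simp only [Set.mem_ofPred_eq, Finset.mem_insert, Finset.mem_singleton]
    lia
  have hR : ∀ i ∈ ({2, 3, 4} : Finset ℕ), i ≠ 0 ∧ i < 6 := by decide
  refine ((tprod_congr_set_coe (fun j ↦ (1 - q ^ j)⁻¹) hset).trans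
    (tprod_inv_one_sub_pow_mod_mem hq hR)).trans ?_
  rw [prod_insert (by decide), prod_insert (by decide), prod_singleton, mul_assoc]

lemma qPochInf_neg_self_div {q : ℂ} (hq : ‖q‖ < 1) :
    qPochInf (-q) q / (1 - q ^ 2) * (qPochInf (q ^ 2 * q ^ 2) (q ^ 2))⁻¹ = (qPochInf q q)⁻¹ := by
  have hq₂ := norm_pow_lt_one hq two_ne_zero
  have hprod : (1 - q ^ 2) * qPochInf (q ^ 2 * q ^ 2) (q ^ 2) = qPochInf q q * qPochInf (-q) q := by
    rw [← qPochInf_sq_sq hq, qPochInf_eq_qPoch_mul hq₂ (q ^ 2) 1, qPoch_succ, qPoch_zero, pow_zero,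
      one_mul, mul_one, pow_one]
  have hne := qPochInf_ne_zero hq₂ (mul_pow_ne_one hq₂ hq₂)
  rw [qPochInf_sq_sq hq] at hne
  rw [← div_eq_mul_inv, div_div, hprod, div_mul_cancel_right₀ (right_ne_zero_of_mul hne)]

lemma qPochInf_self_eq_mod_six {q : ℂ} (hq : ‖q‖ < 1) :
    qPochInf q q = qPochInf q (q ^ 6) * qPochInf (q ^ 2) (q ^ 6) * qPochInf (q ^ 3) (q ^ 6) *
      qPochInf (q ^ 4) (q ^ 6) * qPochInf (q ^ 5) (q ^ 6) * qPochInf (q ^ 6) (q ^ 6) := by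
  rw [qPochInf_eq_prod hq q (m := 6) (by decide)]
  simp only [prod_range_succ, prod_range_zero, one_mul, ← pow_succ', zero_add, pow_one]

/-- Slater's mod 6 analog of the first Rogers–Selberg identity. -/
theorem slater_mod6 (q : ℂ) (hq : ‖q‖ < 1) :
    ∑' j : ℕ, q ^ (2 * j ^ 2 + 2 * j) * qPoch q (q ^ 2) j * qPochInf (-(q ^ (2 * j + 2))) q /
        qPoch (q ^ 2) (q ^ 2) j =
      ∏' j : {j : ℕ // 0 < j ∧ j % 6 ≠ 0 ∧ j % 6 ≠ 1 ∧ j % 6 ≠ 5},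
        (1 - q ^ (j : ℕ))⁻¹ := by
  have hq₆ : ‖q ^ 6‖ < 1 := norm_pow_lt_one hq (by decide)
  have hne {m : ℕ} (hm : m ≠ 0) : qPochInf (q ^ m) (q ^ 6) ≠ 0 :=
    qPochInf_ne_zero hq₆ (mul_pow_ne_one (norm_pow_lt_one hq hm) hq₆)
  have h₁ : qPochInf q (q ^ 6) ≠ 0 := by simpa only [pow_one] using hne one_ne_zero
  have h₅ := hne (m := 5) (by decide)
  have h₆ := hne (m := 6) (by decide)
  have htheta := tsum_qPoch_mul_qPoch_div (x := q) (w := q) (by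
    rw [← pow_two]
    exact norm_pow_lt_one hq two_ne_zero)
  rw [← pow_two, ← pow_mul, ← pow_mul, ← pow_succ'] at htheta
  simp only [pow_mul_qPoch_mul_qPochInf_div_qPoch hq]
  rw [tprod_inv_one_sub_pow_mod_six hq, tsum_mul_left, htheta, mul_left_comm,
    qPochInf_neg_self_div hq, qPochInf_self_eq_mod_six hq]
  field_simp
end
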